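/- Let N be a positive odd integer and let m be an integer with 0 ≤ m, and either m < 2N or m = 2N+1. Then the family of polynomials S_{N,m} = { F_{N+m,j} : 1 ≤ j ≤ N, j odd } is linearly dependent over ℂ. -/

import Mathlib

open MvPolynomial

/-- The polynomial `F_{n,j}(u,v) = u^{n-j}(v-w)^j + v^{n-j}(w-u)^j + w^{n-j}(u-v)^j`
where `w = -(u+v)`. -/
noncomputable def F (n j : ℕ) : MvPolynomial (Fin 2) ℂ :=
  let u : MvPolynomial (Fin 2) ℂ := X 0
  let v : MvPolynomial (Fin 2) ℂ := X 1
  let w : MvPolynomial (Fin 2) ℂ := -(u + v)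
  u ^ (n - j) * (v - w) ^ j + v ^ (n - j) * (w - u) ^ j + w ^ (n - j) * (u - v) ^ j

/-!
For odd `j` the polynomial `F_{n,j}` is alternating in `u, v, w`, so it should be the Vandermonde
product `δ = (u - v)(v - w)(w - u)` times a polynomial in `e₂ = uv + vw + wu` and `e₃ = uvw`.
This can be seen without invariant theory: since `u + v + w = 0`, the relation
`u³ = e₃ - e₂ u` lowers the exponent `n - j`, the relation `(v - w)² = -3u² - 4e₂` lowers `j`,
and the base case is `∑ u²(v - w) = -δ`. Hence all `F_{n,j}` with `j` odd lie in the span of the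
`δ e₂ᵃ e₃ᵇ` with `2a + 3b + 3 = n`. There are at most `⌊n / 6⌋` of these for even `n` and
`⌊(n + 3) / 6⌋` for odd `n`; with `n = N + m` this is less than the number `(N + 1) / 2` of odd
`j ≤ N`.
-/

section CyclicSum

variable {A : Type*} [CommRing A]

/-- The cyclic sum of `u ^ r * (v - w) ^ j`. It is `F_{r+j,j}` with the exponent `n - j` replaced by
a free parameter `r` and with arbitrary ring elements `u`, `v`, `w`. -/
def cyclicSum (u v w : A) (r j : ℕ) : A :=
  u ^ r * (v - w) ^ j + v ^ r * (w - u) ^ j + w ^ r * (u - v) ^ j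

theorem cyclicSum_zero_one (u v w : A) : cyclicSum u v w 0 1 = 0 := by
  rw [cyclicSum]; ring

theorem cyclicSum_one_one (u v w : A) : cyclicSum u v w 1 1 = 0 := by
  rw [cyclicSum]; ring

theorem cyclicSum_two_one (u v w : A) :
    cyclicSum u v w 2 1 = -((u - v) * (v - w) * (w - u)) := by
  rw [cyclicSum]; ring

theorem cyclicSum_add_three_left {u v w : A} (h : u + v + w = 0) (r j : ℕ) :
    cyclicSum u v w (r + 3) j =
      u * v * w * cyclicSum u v w r j - (u * v + v * w + w * u) * cyclicSum u v w (r + 1) j := by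
  -- `u³ - e₁ u² + e₂ u - e₃ = 0` for arbitrary `u, v, w`, and `e₁ = 0` here.
  have cubic : cyclicSum u v w (r + 3) j =
      (u + v + w) * cyclicSum u v w (r + 2) j
        - (u * v + v * w + w * u) * cyclicSum u v w (r + 1) j
        + u * v * w * cyclicSum u v w r j := by
    simp only [cyclicSum]; ring
  linear_combination cubic + cyclicSum u v w (r + 2) j * h

theorem cyclicSum_add_two_right {u v w : A} (h : u + v + w = 0) (r j : ℕ) :
    cyclicSum u v w r (j + 2) =
      -(3 • cyclicSum u v w (r + 2) j)
        - 4 • ((u * v + v * w + w * u) * cyclicSum u v w r j) := by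
  -- `(v - w)² = -3u² - 4e₂ + 2e₁u + e₁²` for arbitrary `u, v, w`, and `e₁ = 0` here.
  have quadratic : cyclicSum u v w r (j + 2) =
      -(3 * cyclicSum u v w (r + 2) j) - 4 * ((u * v + v * w + w * u) * cyclicSum u v w r j)
        + 2 * (u + v + w) * cyclicSum u v w (r + 1) j
        + (u + v + w) ^ 2 * cyclicSum u v w r j := by
    simp only [cyclicSum]; ring
  simpa [h] using quadratic

end CyclicSum

/-- The pairs `(a, b)` for which `δ e₂ᵃ e₃ᵇ` has weight `n`, where `e₂`, `e₃` and `δ` have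
weights `2`, `3` and `3`. -/
def weightExponents (n : ℕ) : Finset (ℕ × ℕ) :=
  {p ∈ Finset.range n ×ˢ Finset.range n | 2 * p.1 + 3 * p.2 + 3 = n}

theorem mem_weightExponents {n : ℕ} {p : ℕ × ℕ} :
    p ∈ weightExponents n ↔ 2 * p.1 + 3 * p.2 + 3 = n := by
  simp only [weightExponents, Finset.mem_filter, Finset.mem_product, Finset.mem_range]
  omega

theorem card_weightExponents_le (n : ℕ) : (weightExponents n).card ≤ (n + 3 * (n % 2)) / 6 := by
  rw [← Finset.card_range ((n + 3 * (n % 2)) / 6)]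
  -- The parity of `b` is determined by `n`, so `b / 2` determines the pair.
  refine Finset.card_le_card_of_injOn (fun p ↦ p.2 / 2) (fun p hp ↦ ?_) fun p hp q hq hpq ↦ ?_
  · rw [Finset.mem_coe, mem_weightExponents] at hp
    have parity : p.2 % 2 + n % 2 = 1 := by omega
    simp only [Finset.coe_range, Set.mem_Iio]
    omega
  · rw [Finset.mem_coe, mem_weightExponents] at hp hq
    simp only at hpq
    ext <;> omega

section WeightSpan

variable (R : Type*) {A : Type*} [CommRing R] [CommRing A] [Algebra R A]

/-- The span of the products `δ e₂ᵃ e₃ᵇ` of weight `n`. When `δ`, `e₂`, `e₃` are the Vandermonde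
product and the elementary symmetric functions of indeterminates `u`, `v`, `w` subject to
`u + v + w = 0`, it consists of alternating forms of degree `n`. -/
def weightSpan (δ e₂ e₃ : A) (n : ℕ) : Submodule R A :=
  Submodule.span R ((fun p ↦ δ * e₂ ^ p.1 * e₃ ^ p.2) '' (weightExponents n : Set (ℕ × ℕ)))

variable {R} {δ e₂ e₃ x : A} {n : ℕ}

theorem mul_pow_mul_pow_mem_weightSpan {a b : ℕ} (h : 2 * a + 3 * b + 3 = n) :
    δ * e₂ ^ a * e₃ ^ b ∈ weightSpan R δ e₂ e₃ n :=
  Submodule.subset_span ⟨(a, b), mem_weightExponents.2 h, rfl⟩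

theorem self_mem_weightSpan : δ ∈ weightSpan R δ e₂ e₃ 3 := by
  simpa using mul_pow_mul_pow_mem_weightSpan (R := R) (δ := δ) (e₂ := e₂) (e₃ := e₃)
    (a := 0) (b := 0) rfl

theorem weightSpan_le_iff {S : Submodule R A} :
    weightSpan R δ e₂ e₃ n ≤ S ↔
      ∀ a b, 2 * a + 3 * b + 3 = n → δ * e₂ ^ a * e₃ ^ b ∈ S := by
  rw [weightSpan, Submodule.span_le, Set.image_subset_iff]
  simp [Set.subset_def, mem_weightExponents]

theorem mul_mem_weightSpan_add_two (hx : x ∈ weightSpan R δ e₂ e₃ n) :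
    e₂ * x ∈ weightSpan R δ e₂ e₃ (n + 2) := by
  suffices weightSpan R δ e₂ e₃ n ≤
      (weightSpan R δ e₂ e₃ (n + 2)).comap (LinearMap.mulLeft R e₂) from this hx
  refine weightSpan_le_iff.2 fun a b hab ↦ ?_
  have shifted : δ * e₂ ^ (a + 1) * e₃ ^ b ∈ weightSpan R δ e₂ e₃ (n + 2) :=
    mul_pow_mul_pow_mem_weightSpan (by omega)
  rw [Submodule.mem_comap, LinearMap.mulLeft_apply]
  convert shifted using 1
  ring

theorem mul_mem_weightSpan_add_three (hx : x ∈ weightSpan R δ e₂ e₃ n) :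
    e₃ * x ∈ weightSpan R δ e₂ e₃ (n + 3) := by
  suffices weightSpan R δ e₂ e₃ n ≤
      (weightSpan R δ e₂ e₃ (n + 3)).comap (LinearMap.mulLeft R e₃) from this hx
  refine weightSpan_le_iff.2 fun a b hab ↦ ?_
  have shifted : δ * e₂ ^ a * e₃ ^ (b + 1) ∈ weightSpan R δ e₂ e₃ (n + 3) :=
    mul_pow_mul_pow_mem_weightSpan (by omega)
  rw [Submodule.mem_comap, LinearMap.mulLeft_apply]
  convert shifted using 1
  ring

theorem card_le_of_linearIndependent_of_mem_weightSpan [Nontrivial R] {ι : Type*} [Fintype ι]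
    {f : ι → A} (hf : LinearIndependent R f) (hmem : ∀ i, f i ∈ weightSpan R δ e₂ e₃ n) :
    Fintype.card ι ≤ (n + 3 * (n % 2)) / 6 := by
  classical
  let products : Finset A := (weightExponents n).image fun p ↦ δ * e₂ ^ p.1 * e₃ ^ p.2
  have hspan : Set.range f ≤ (Submodule.span R (products : Set A) : Set A) := by
    rintro _ ⟨i, rfl⟩
    simpa only [products, Finset.coe_image, SetLike.mem_coe, weightSpan] using hmem i
  calc Fintype.card ι
    _ ≤ products.card := by simpa using linearIndependent_le_span' f hf _ hspan
    _ ≤ (weightExponents n).card := Finset.card_image_le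
    _ ≤ (n + 3 * (n % 2)) / 6 := card_weightExponents_le n

end WeightSpan

section Membership

variable {R A : Type*} [CommRing R] [CommRing A] [Algebra R A] {u v w : A}

theorem cyclicSum_one_mem_weightSpan (h : u + v + w = 0) : ∀ r : ℕ,
    cyclicSum u v w r 1 ∈
      weightSpan R ((u - v) * (v - w) * (w - u)) (u * v + v * w + w * u) (u * v * w) (r + 1)
  | 0 => by rw [cyclicSum_zero_one]; exact zero_mem _
  | 1 => by rw [cyclicSum_one_one]; exact zero_mem _
  | 2 => by rw [cyclicSum_two_one]; exact neg_mem self_mem_weightSpan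
  | r + 3 => by
    rw [cyclicSum_add_three_left h]
    exact sub_mem (mul_mem_weightSpan_add_three (cyclicSum_one_mem_weightSpan h r))
      (mul_mem_weightSpan_add_two (cyclicSum_one_mem_weightSpan h (r + 1)))

theorem cyclicSum_mem_weightSpan (h : u + v + w = 0) (r : ℕ) {j : ℕ} (hj : Odd j) :
    cyclicSum u v w r j ∈
      weightSpan R ((u - v) * (v - w) * (w - u)) (u * v + v * w + w * u) (u * v * w) (r + j) := by
  obtain ⟨i, rfl⟩ := hj
  induction i generalizing r with
  | zero => exact cyclicSum_one_mem_weightSpan h r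
  | succ i ih =>
    rw [show 2 * (i + 1) + 1 = 2 * i + 1 + 2 by ring, cyclicSum_add_two_right h]
    refine sub_mem (neg_mem (nsmul_mem ?_ 3)) (nsmul_mem (mul_mem_weightSpan_add_two (ih r)) 4)
    convert ih (r + 2) using 2
    omega

end Membership

theorem card_le_of_linearIndependent_F {ι : Type*} [Fintype ι] {n : ℕ} {j : ι → ℕ}
    (hodd : ∀ i, Odd (j i)) (hle : ∀ i, j i ≤ n)
    (hli : LinearIndependent ℂ fun i ↦ F n (j i)) :
    Fintype.card ι ≤ (n + 3 * (n % 2)) / 6 := by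
  have hmem (i : ι) := cyclicSum_mem_weightSpan (R := ℂ)
    (add_neg_cancel (X 0 + X 1 : MvPolynomial (Fin 2) ℂ)) (n - j i) (hodd i)
  simp only [Nat.sub_add_cancel (hle _)] at hmem
  exact card_le_of_linearIndependent_of_mem_weightSpan hli hmem

/-- Remark 1.4: for `N` a positive odd integer and `m < 2N` or `m = 2N+1`, the family
`S_{N,m} = {F_{N+m,j} : 1 ≤ j ≤ N, j odd}` is linearly dependent over `ℂ`. -/
theorem stmt_6 (N m : ℕ) (hNodd : Odd N) (hNpos : 1 ≤ N)
    (hm : m < 2 * N ∨ m = 2 * N + 1) :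
    ¬ LinearIndependent ℂ
      (fun j : {j : ℕ // 1 ≤ j ∧ j ≤ N ∧ Odd j} => F (N + m) j.1) := by
  intro hli
  obtain ⟨k, rfl⟩ := hNodd
  let oddIndex (i : Fin (k + 1)) : {j : ℕ // 1 ≤ j ∧ j ≤ 2 * k + 1 ∧ Odd j} :=
    ⟨2 * i + 1, by omega, by omega, i, rfl⟩
  have oddIndex_injective : Function.Injective oddIndex := fun i i' h ↦ by
    simpa [oddIndex, Fin.ext_iff] using h
  have hcard : k + 1 ≤ (2 * k + 1 + m + 3 * ((2 * k + 1 + m) % 2)) / 6 := by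
    simpa using card_le_of_linearIndependent_F (fun i ↦ (oddIndex i).2.2.2)
      (fun i ↦ (oddIndex i).2.2.1.trans (Nat.le_add_right _ m))
      (hli.comp oddIndex oddIndex_injective)
  omega
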